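/- For every integer d ≥ 2 and every real λ, ∫_{-1}^{1} exp(λ·t) · c_d·(1-t²)^{(d-3)/2} dt ≤ exp(λ²/(2d)). Consequently, if Z and Z' are independent uniform random points on the unit sphere S^{d-1} ⊂ ℝ^d, then E[exp(λ·⟨Z,Z'⟩)] ≤ exp(λ²/(2d)); i.e., ⟨Z,Z'⟩ is sub-Gaussian with parameter 1/√d. -/

import Mathlib

open MeasureTheory ProbabilityTheory
open scoped RealInnerProductSpace

/-- The density of one coordinate of a uniform random point on `S^{d-1}`:
`f_d(t) = c_d * (1 - t²)^{(d-3)/2}` with `c_d = Γ(d/2)/(√π * Γ((d-1)/2))`. -/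
noncomputable def sphereCoordDensity (d : ℕ) (t : ℝ) : ℝ :=
  (Real.Gamma ((d : ℝ) / 2) / (Real.sqrt Real.pi * Real.Gamma (((d : ℝ) - 1) / 2))) *
    (1 - t ^ 2) ^ (((d : ℝ) - 3) / 2)

/-- The density is nonnegative on the open interval. -/
lemma scd_nonneg (d : ℕ) (hd : 2 ≤ d) (t : ℝ) (ht : t ∈ Set.Ioo (-1 : ℝ) 1) :
    0 ≤ sphereCoordDensity d t := by
  have hd' : (2 : ℝ) ≤ d := by exact_mod_cast hd
  unfold sphereCoordDensity
  have h1 : 0 < Real.Gamma ((d : ℝ) / 2) := Real.Gamma_pos_of_pos (by linarith)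
  have h2 : 0 < Real.Gamma (((d : ℝ) - 1) / 2) := Real.Gamma_pos_of_pos (by linarith)
  have h3 : 0 ≤ 1 - t ^ 2 := by nlinarith [ht.1, ht.2]
  have := Real.rpow_nonneg h3 (((d : ℝ) - 3) / 2)
  positivity

lemma scd_measurable (d : ℕ) : Measurable (sphereCoordDensity d) := by
  unfold sphereCoordDensity
  fun_prop

/-- Integration by parts in differential form. -/
lemma scd_parts (d : ℕ) (hd : 2 ≤ d)
    (hint : IntervalIntegrable (sphereCoordDensity d) volume (-1) 1) (n : ℕ) :
    ∫ t in (-1 : ℝ)..1, ((n : ℝ) * t ^ (n - 1) * (1 - t ^ 2) - ((d : ℝ) - 1) * t ^ (n + 1))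
      * sphereCoordDensity d t = 0 := by
  have hd' : (2 : ℝ) ≤ d := by exact_mod_cast hd
  set c : ℝ := Real.Gamma ((d : ℝ) / 2) / (Real.sqrt Real.pi * Real.Gamma (((d : ℝ) - 1) / 2))
    with hc
  have key := intervalIntegral.integral_eq_sub_of_hasDerivAt_of_le
    (a := (-1 : ℝ)) (b := 1)
    (f := fun t => c * (t ^ n * (1 - t ^ 2) ^ (((d : ℝ) - 1) / 2)))
    (f' := fun t => ((n : ℝ) * t ^ (n - 1) * (1 - t ^ 2) - ((d : ℝ) - 1) * t ^ (n + 1))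
      * sphereCoordDensity d t) (by norm_num) ?_ ?_ ?_
  · rw [key]
    have : ((d : ℝ) - 1) / 2 ≠ 0 := by linarith
    simp [Real.zero_rpow this]
  · apply Continuous.continuousOn
    have : Continuous fun t : ℝ => (1 - t ^ 2) ^ (((d : ℝ) - 1) / 2) :=
      Continuous.rpow_const (by fun_prop) (fun x => Or.inr (by linarith))
    fun_prop
  · intro t ht
    have h3 : 0 < 1 - t ^ 2 := by nlinarith [ht.1, ht.2]
    have hb : HasDerivAt (fun t : ℝ => 1 - t ^ 2) (-(2 * t)) t := by
      simpa using (hasDerivAt_pow 2 t).const_sub 1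
    have hr := hb.rpow_const (p := ((d : ℝ) - 1) / 2) (Or.inl h3.ne')
    have hm := ((hasDerivAt_pow n t).mul hr).const_mul c
    refine hm.congr_deriv ?_
    have e1 : ((d : ℝ) - 1) / 2 = ((d : ℝ) - 3) / 2 + 1 := by ring
    have e2 : ((d : ℝ) - 1) / 2 - 1 = ((d : ℝ) - 3) / 2 := by ring
    have e3 : (1 - t ^ 2) ^ (((d : ℝ) - 1) / 2) = (1 - t ^ 2) ^ (((d : ℝ) - 3) / 2) * (1 - t ^ 2) := by
      rw [e1, Real.rpow_add_one h3.ne']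
    rw [e2, e3]
    unfold sphereCoordDensity
    rw [← hc]
    ring
  · exact hint.continuousOn_mul (Continuous.continuousOn (by fun_prop))

lemma scd_rec (d : ℕ) (hd : 2 ≤ d)
    (hint : IntervalIntegrable (sphereCoordDensity d) volume (-1) 1) (n : ℕ) :
    ((n : ℝ) + d) * ∫ t in (-1 : ℝ)..1, t ^ (n + 2) * sphereCoordDensity d t =
      (n + 1) * ∫ t in (-1 : ℝ)..1, t ^ n * sphereCoordDensity d t := by
  have h := scd_parts d hd hint (n + 1)
  have hI : ∀ k : ℕ, IntervalIntegrable (fun t => t ^ k * sphereCoordDensity d t) volume (-1) 1 :=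
    fun k => hint.continuousOn_mul (Continuous.continuousOn (by fun_prop))
  have e : ∀ t : ℝ, (((n + 1 : ℕ) : ℝ) * t ^ (n + 1 - 1) * (1 - t ^ 2)
      - ((d : ℝ) - 1) * t ^ (n + 1 + 1)) * sphereCoordDensity d t =
      ((n : ℝ) + 1) * (t ^ n * sphereCoordDensity d t) -
      ((n : ℝ) + d) * (t ^ (n + 2) * sphereCoordDensity d t) := by
    intro t
    push_cast
    try rw [Nat.add_sub_cancel]
    ring
  simp only [e] at h
  rw [intervalIntegral.integral_sub ((hI n).const_mul _) ((hI (n + 2)).const_mul _),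
    intervalIntegral.integral_const_mul, intervalIntegral.integral_const_mul] at h
  linarith

lemma scd_odd (d : ℕ) (hd : 2 ≤ d)
    (hint : IntervalIntegrable (sphereCoordDensity d) volume (-1) 1) (k : ℕ) :
    ∫ t in (-1 : ℝ)..1, t ^ (2 * k + 1) * sphereCoordDensity d t = 0 := by
  have hd' : (2 : ℝ) ≤ d := by exact_mod_cast hd
  induction k with
  | zero =>
    have h := scd_parts d hd hint 0
    have e : ∀ t : ℝ, (((0 : ℕ) : ℝ) * t ^ (0 - 1) * (1 - t ^ 2)
      - ((d : ℝ) - 1) * t ^ (0 + 1)) * sphereCoordDensity d t =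
      (-((d : ℝ) - 1)) * (t ^ (2 * 0 + 1) * sphereCoordDensity d t) := by
      intro t
      simp
      ring
    simp only [e] at h
    rw [intervalIntegral.integral_const_mul] at h
    rcases mul_eq_zero.mp h with h | h
    · linarith
    · exact h
  | succ k ih =>
    have h := scd_rec d hd hint (2 * k + 1)
    rw [ih, mul_zero] at h
    rcases mul_eq_zero.mp h with h | h
    · have : (0 : ℝ) ≤ ((2 * k + 1 : ℕ) : ℝ) := by positivity
      linarith
    · exact h

lemma scd_even (d : ℕ) (hd : 2 ≤ d)
    (hint : IntervalIntegrable (sphereCoordDensity d) volume (-1) 1)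
    (hone : ∫ t in (-1 : ℝ)..1, sphereCoordDensity d t = 1) (l : ℝ) (k : ℕ) :
    0 ≤ l ^ (2 * k) / (2 * k).factorial * ∫ t in (-1 : ℝ)..1, t ^ (2 * k) * sphereCoordDensity d t ∧
    l ^ (2 * k) / (2 * k).factorial * ∫ t in (-1 : ℝ)..1, t ^ (2 * k) * sphereCoordDensity d t
      ≤ (l ^ 2 / (2 * d)) ^ k / k.factorial := by
  have hd' : (2 : ℝ) ≤ d := by exact_mod_cast hd
  induction k with
  | zero => simp [hone]
  | succ k ih =>
    have h := scd_rec d hd hint (2 * k)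
    have hk : (0 : ℝ) ≤ k := by positivity
    push_cast at h
    set A := ∫ t in (-1 : ℝ)..1, t ^ (2 * k) * sphereCoordDensity d t
    have e0 : 2 * (k + 1) = 2 * k + 2 := by ring
    rw [e0]
    set B := ∫ t in (-1 : ℝ)..1, t ^ (2 * k + 2) * sphereCoordDensity d t
    have hB : B = (2 * k + 1) * A / (2 * k + d) := by
      rw [eq_div_iff (by positivity)]; linarith
    have hf : (((2 * k + 2).factorial : ℕ) : ℝ) = (2 * k + 2) * ((2 * k + 1) * (2 * k).factorial) := by
      rw [Nat.factorial_succ, Nat.factorial_succ]; push_cast; ring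
    have hfp : (0 : ℝ) < (2 * k).factorial := by positivity
    have e1 : l ^ (2 * k + 2) / ((2 * k + 2).factorial : ℝ) * B
        = (l ^ (2 * k) / (2 * k).factorial * A) * (l ^ 2 / ((2 * k + 2) * (2 * k + d))) := by
      rw [hf, hB]
      field_simp
      ring
    have e2 : (l ^ 2 / (2 * d)) ^ (k + 1) / ((k + 1).factorial : ℝ) =
        (l ^ 2 / (2 * d)) ^ k / k.factorial * (l ^ 2 / ((2 * k + 2) * d)) := by
      rw [Nat.factorial_succ, pow_succ]
      push_cast
      have hfp : (0 : ℝ) < k.factorial := by positivity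
      field_simp
    rw [e1, e2]
    refine ⟨mul_nonneg ih.1 (by positivity), ?_⟩
    refine mul_le_mul ih.2 ?_ (by positivity) (by positivity)
    gcongr
    linarith

lemma scd_mgf (d : ℕ) (hd : 2 ≤ d)
    (hint : IntervalIntegrable (sphereCoordDensity d) volume (-1) 1)
    (hone : ∫ t in (-1 : ℝ)..1, sphereCoordDensity d t = 1) (l : ℝ) :
    ∫ t in (-1 : ℝ)..1, Real.exp (l * t) * sphereCoordDensity d t ≤
      Real.exp (l ^ 2 / (2 * d)) := by
  have hexp : ∀ x : ℝ, HasSum (fun n : ℕ => x ^ n / n.factorial) (Real.exp x) := by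
    intro x
    rw [Real.exp_eq_exp_ℝ]
    exact NormedSpace.expSeries_div_hasSum_exp x
  have hs : HasSum (fun n : ℕ => ∫ t in (-1 : ℝ)..1,
      (l ^ n / n.factorial) * (t ^ n * sphereCoordDensity d t))
      (∫ t in (-1 : ℝ)..1, Real.exp (l * t) * sphereCoordDensity d t) := by
    apply intervalIntegral.hasSum_integral_of_dominated_convergence
      (bound := fun n t => (|l| ^ n / n.factorial) * |sphereCoordDensity d t|)
    · intro n
      have := scd_measurable d
      exact Measurable.aestronglyMeasurable (by fun_prop)
    · intro n
      refine Filter.Eventually.of_forall fun t ht => ?_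
      rw [Set.uIoc_of_le (by norm_num)] at ht
      have h1 : |t| ≤ 1 := abs_le.mpr ⟨ht.1.le, ht.2⟩
      have h2 : |t| ^ n ≤ 1 := pow_le_one₀ (abs_nonneg t) h1
      simp only [Real.norm_eq_abs, abs_mul, abs_div, abs_pow, Nat.abs_cast]
      gcongr
      exact mul_le_of_le_one_left (abs_nonneg _) h2
    · exact Filter.Eventually.of_forall fun t ht => ((hexp |l|).mul_right _).summable
    · have e : ∀ t, ∑' n : ℕ, (|l| ^ n / n.factorial) * |sphereCoordDensity d t|
          = Real.exp |l| * |sphereCoordDensity d t| :=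
        fun t => ((hexp |l|).mul_right _).tsum_eq
      simp only [e]
      exact hint.abs.const_mul _
    · refine Filter.Eventually.of_forall fun t ht => ?_
      have := (hexp (l * t)).mul_right (sphereCoordDensity d t)
      refine this.congr_fun ?_
      intro n
      rw [mul_pow]; ring
  simp only [intervalIntegral.integral_const_mul] at hs
  have hinj : Function.Injective (fun k : ℕ => 2 * k) := fun a b h => by simpa using h
  rw [← hinj.hasSum_iff] at hs
  · exact hasSum_le (fun k => (scd_even d hd hint hone l k).2) hs (hexp _)
  · intro n hn
    rcases Nat.even_or_odd' n with ⟨k, rfl | rfl⟩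
    · exact absurd ⟨k, rfl⟩ hn
    · rw [scd_odd d hd hint k, mul_zero]

/-- Sub-Gaussian mgf bound for the pairwise cosine: for `d ≥ 2` and `λ ∈ ℝ`,
`∫_{-1}^{1} exp (λ t) f_d(t) dt ≤ exp (λ²/(2d))`; consequently, if `Z, Z'` are
independent random points on the unit sphere `S^{d-1}` whose inner product has
(by rotational invariance of the uniform distribution) the density `f_d` on
`(-1, 1)`, then `E[exp (λ ⟪Z, Z'⟫)] ≤ exp (λ²/(2d))`, i.e. `⟪Z, Z'⟫` is
sub-Gaussian with parameter `1/√d`. -/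
theorem pairwise_cosine_subGaussian_mgf (d : ℕ) (hd : 2 ≤ d) (l : ℝ)
    {Ω : Type*} [MeasurableSpace Ω] (P : Measure Ω) [IsProbabilityMeasure P]
    (Z Z' : Ω → EuclideanSpace ℝ (Fin d))
    (hZ : Measurable Z) (hZ' : Measurable Z')
    (hindep : IndepFun Z Z' P)
    (hZs : ∀ᵐ ω ∂P, ‖Z ω‖ = 1) (hZ's : ∀ᵐ ω ∂P, ‖Z' ω‖ = 1)
    (hlaw : Measure.map (fun ω => ⟪Z ω, Z' ω⟫) P =
      (volume.restrict (Set.Ioo (-1 : ℝ) 1)).withDensity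
        (fun t => ENNReal.ofReal (sphereCoordDensity d t))) :
    (∫ t in (-1 : ℝ)..1, Real.exp (l * t) * sphereCoordDensity d t ≤
      Real.exp (l ^ 2 / (2 * d))) ∧
    (∫ ω, Real.exp (l * ⟪Z ω, Z' ω⟫) ∂P ≤ Real.exp (l ^ 2 / (2 * d))) := by
  have hmeas := scd_measurable d
  have hX : Measurable (fun ω => ⟪Z ω, Z' ω⟫) := hZ.inner hZ'
  have hnn : 0 ≤ᵐ[volume.restrict (Set.Ioo (-1 : ℝ) 1)] sphereCoordDensity d :=
    (ae_restrict_iff' measurableSet_Ioo).mpr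
      (Filter.Eventually.of_forall fun t ht => scd_nonneg d hd t ht)
  have hprob : IsProbabilityMeasure (Measure.map (fun ω => ⟪Z ω, Z' ω⟫) P) :=
    Measure.isProbabilityMeasure_map hX.aemeasurable
  have hl : ∫⁻ t in Set.Ioo (-1 : ℝ) 1, ENNReal.ofReal (sphereCoordDensity d t) = 1 := by
    have := hprob.measure_univ
    rw [hlaw, withDensity_apply _ MeasurableSet.univ, Measure.restrict_univ] at this
    exact this
  have hone0 : ∫ t in Set.Ioo (-1 : ℝ) 1, sphereCoordDensity d t = 1 := by
    rw [integral_eq_lintegral_of_nonneg_ae hnn hmeas.aestronglyMeasurable, hl]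
    simp
  have hint0 : IntegrableOn (sphereCoordDensity d) (Set.Ioo (-1 : ℝ) 1) := by
    by_contra h
    rw [integral_undef h] at hone0
    norm_num at hone0
  have hint : IntervalIntegrable (sphereCoordDensity d) volume (-1) 1 :=
    (intervalIntegrable_iff_integrableOn_Ioo_of_le (by norm_num)).mpr hint0
  have hone : ∫ t in (-1 : ℝ)..1, sphereCoordDensity d t = 1 := by
    rw [intervalIntegral.integral_of_le (by norm_num), integral_Ioc_eq_integral_Ioo, hone0]
  have main := scd_mgf d hd hint hone l
  refine ⟨main, ?_⟩
  have e : ∫ ω, Real.exp (l * ⟪Z ω, Z' ω⟫) ∂P =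
      ∫ t, Real.exp (l * t) ∂(Measure.map (fun ω => ⟪Z ω, Z' ω⟫) P) := by
    rw [integral_map hX.aemeasurable]
    exact Measurable.aestronglyMeasurable (by fun_prop)
  rw [e, hlaw, integral_withDensity_eq_integral_toReal_smul (by fun_prop)
    (Filter.Eventually.of_forall fun _ => ENNReal.ofReal_lt_top)]
  rw [intervalIntegral.integral_of_le (by norm_num), integral_Ioc_eq_integral_Ioo] at main
  refine le_trans (le_of_eq ?_) main
  refine setIntegral_congr_fun measurableSet_Ioo fun t ht => ?_
  simp only [smul_eq_mul]
  rw [ENNReal.toReal_ofReal (scd_nonneg d hd t ht), mul_comm]
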